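/- Let 𝒦₁, 𝒦₂ be simplicial complexes over S and let N ≥ 0 be such that π_N(𝒦₁) = π_N(𝒦₂) and π_{N+1}(𝒦₁) ≠ π_{N+1}(𝒦₂). Then d(𝒦₁, 𝒦₂) ≥ 1/(N+2). -/

import Mathlib

open scoped BigOperators

/-- A simplicial complex over the vertex set `S`: a nonempty collection of
nonempty finite subsets of `S`, closed under taking nonempty subsets. -/
def IsSimplicialComplex {S : Type*} (K : Set (Finset S)) : Prop :=
  K.Nonempty ∧ (∀ F ∈ K, F.Nonempty) ∧
    ∀ F ∈ K, ∀ G : Finset S, G.Nonempty → G ⊆ F → G ∈ K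

/-- Halved ℓ¹ distance between finitely supported real functions:
`d(α,β) = (1/2) ∑ₛ |α s - β s|`. -/
noncomputable def l1dist {S : Type*} (α β : S →₀ ℝ) : ℝ :=
  (1 / 2) * (α - β).sum fun _ x => |x|

/-- The ℓ¹ geometric realization of a collection `K` of finite subsets of `S`:
finitely supported probability vectors whose support is a face of `K`. -/
def realization {S : Type*} (K : Set (Finset S)) : Set (S →₀ ℝ) :=
  {α | (∀ s, 0 ≤ α s) ∧ (α.sum fun _ x => x) = 1 ∧ α.support ∈ K}

/-- Distance from a point to a set of finitely supported functions. -/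
noncomputable def distToSet {S : Type*} (α : S →₀ ℝ) (X : Set (S →₀ ℝ)) : ℝ :=
  sInf (l1dist α '' X)

/-- One-sided Hausdorff distance between (the realizations of) two complexes. -/
noncomputable def hdelta {S : Type*} (K₁ K₂ : Set (Finset S)) : ℝ :=
  sSup ((fun α => distToSet α (realization K₂)) '' realization K₁)

/-- Hausdorff distance between (the realizations of) two simplicial complexes. -/
noncomputable def hdist {S : Type*} (K₁ K₂ : Set (Finset S)) : ℝ :=
  max (hdelta K₁ K₂) (hdelta K₂ K₁)

/-- `d(F, K)`: supremum of distances to `|K|₁` over probability vectors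
supported exactly on `F`. -/
noncomputable def dFace {S : Type*} (F : Finset S) (K : Set (Finset S)) : ℝ :=
  sSup ((fun α => distToSet α (realization K)) ''
    {α : S →₀ ℝ | (∀ s, 0 ≤ α s) ∧ (α.sum fun _ x => x) = 1 ∧ α.support = F})

/-- The `n`-skeleton of a simplicial complex. -/
def skeleton {S : Type*} (n : ℕ) (K : Set (Finset S)) : Set (Finset S) :=
  {F | F ∈ K ∧ F.card ≤ n + 1}

/-!
A face `F` of `𝒦₁` missing from `𝒦₂` keeps its barycenter at distance at least `1/|F|` from `|𝒦₂|₁`: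
the support of a point `β` of `|𝒦₂|₁` cannot contain `F`, so `β` vanishes at some vertex `s` of `F`,
where the barycenter has mass `1/|F|`. Between functions of equal total mass, the halved ℓ¹ distance
is at least the excess of one over the other on any finite set, here `{s}`.
-/

section L1Dist

variable {S : Type*} {α β : S →₀ ℝ}

lemma l1dist_eq_sum {T : Finset S} (hα : α.support ⊆ T) (hβ : β.support ⊆ T) :
    l1dist α β = (1 / 2) * ∑ s ∈ T, |α s - β s| := by
  classical
  have hT : (α - β).support ⊆ T := Finsupp.support_sub.trans (Finset.union_subset hα hβ)
  simp only [l1dist, Finsupp.sum_of_support_subset _ hT _ fun _ _ => abs_zero, Finsupp.sub_apply]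

lemma l1dist_nonneg (α β : S →₀ ℝ) : 0 ≤ l1dist α β :=
  mul_nonneg (by norm_num) (Finset.sum_nonneg fun _ _ => abs_nonneg _)

lemma l1dist_le_half_sum_add_sum (hα : ∀ s, 0 ≤ α s) (hβ : ∀ s, 0 ≤ β s) :
    l1dist α β ≤ (1 / 2) * ((α.sum fun _ x => x) + β.sum fun _ x => x) := by
  classical
  have hαT : α.support ⊆ α.support ∪ β.support := Finset.subset_union_left
  have hβT : β.support ⊆ α.support ∪ β.support := Finset.subset_union_right
  rw [l1dist_eq_sum hαT hβT, Finsupp.sum_of_support_subset _ hαT _ fun _ _ => rfl,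
    Finsupp.sum_of_support_subset _ hβT _ fun _ _ => rfl, ← Finset.sum_add_distrib]
  gcongr with s
  exact abs_sub_le_iff.2 ⟨by linarith [hβ s], by linarith [hα s]⟩

lemma sum_sub_le_l1dist (h : (α.sum fun _ x => x) = β.sum fun _ x => x) (T : Finset S) :
    ∑ s ∈ T, (α s - β s) ≤ l1dist α β := by
  classical
  let U := α.support ∪ β.support ∪ T
  have hα : α.support ⊆ U := Finset.subset_union_left.trans Finset.subset_union_left
  have hβ : β.support ⊆ U := Finset.subset_union_right.trans Finset.subset_union_left
  have sum_sub_eq_zero : ∑ s ∈ U, (α s - β s) = 0 := by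
    rw [Finsupp.sum_of_support_subset _ hα _ fun _ _ => rfl,
      Finsupp.sum_of_support_subset _ hβ _ fun _ _ => rfl] at h
    rw [Finset.sum_sub_distrib, h, sub_self]
  calc ∑ s ∈ T, (α s - β s)
      = (1 / 2) * ∑ s ∈ T, ((α s - β s) + (α s - β s)) := by
        rw [Finset.sum_add_distrib]; ring
    _ ≤ (1 / 2) * ∑ s ∈ T, (|α s - β s| + (α s - β s)) := by
        gcongr
        exact le_abs_self _
    _ ≤ (1 / 2) * ∑ s ∈ U, (|α s - β s| + (α s - β s)) := by
        gcongr
        · intro s _ _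
          linarith [neg_abs_le (α s - β s)]
        · exact Finset.subset_union_right
    _ = l1dist α β := by
        rw [Finset.sum_add_distrib, sum_sub_eq_zero, add_zero, l1dist_eq_sum hα hβ]

lemma distToSet_le_l1dist {X : Set (S →₀ ℝ)} (hβ : β ∈ X) : distToSet α X ≤ l1dist α β :=
  csInf_le ⟨0, Set.forall_mem_image.2 fun γ _ => l1dist_nonneg α γ⟩ (Set.mem_image_of_mem _ hβ)

lemma le_distToSet {X : Set (S →₀ ℝ)} (hX : X.Nonempty) {r : ℝ} (h : ∀ β ∈ X, r ≤ l1dist α β) :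
    r ≤ distToSet α X :=
  le_csInf (hX.image _) (Set.forall_mem_image.2 h)

end L1Dist

section Realization

variable {S : Type*} {K L : Set (Finset S)} {α β : S →₀ ℝ} {F : Finset S}

lemma l1dist_le_one (hα : α ∈ realization K) (hβ : β ∈ realization L) : l1dist α β ≤ 1 := by
  have h := l1dist_le_half_sum_add_sum hα.1 hβ.1
  rw [hα.2.1, hβ.2.1] at h
  linarith

lemma distToSet_le_hdelta (hL : (realization L).Nonempty) (hα : α ∈ realization K) :
    distToSet α (realization L) ≤ hdelta K L := by
  obtain ⟨β, hβ⟩ := hL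
  exact le_csSup
    ⟨1, Set.forall_mem_image.2 fun _ hγ => (distToSet_le_l1dist hβ).trans (l1dist_le_one hγ hβ)⟩
    (Set.mem_image_of_mem _ hα)

/-- The barycenter of a finite set `F`, the uniform probability vector on `F`; used as
the point of the face `F` whose smallest coordinate is largest. It is `0` when `F = ∅`. -/
noncomputable def barycenter (F : Finset S) : S →₀ ℝ :=
  Finsupp.indicator F fun _ _ => 1 / (F.card : ℝ)

lemma barycenter_apply_of_mem {s : S} (hs : s ∈ F) : barycenter F s = 1 / (F.card : ℝ) :=
  Finsupp.indicator_of_mem hs _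

lemma barycenter_nonneg (F : Finset S) (s : S) : 0 ≤ barycenter F s := by
  classical
  rw [barycenter, Finsupp.indicator_apply]
  split_ifs <;> positivity

lemma support_barycenter (F : Finset S) : (barycenter F).support = F := by
  refine Finset.Subset.antisymm (Finsupp.support_indicator_subset F _) fun s hs => ?_
  rw [Finsupp.mem_support_iff]
  exact (barycenter_apply_of_mem hs).trans_ne <|
    one_div_ne_zero (Nat.cast_ne_zero.2 (Finset.card_ne_zero_of_mem hs))

lemma sum_barycenter (hF : F.Nonempty) : ((barycenter F).sum fun _ x => x) = 1 := by
  have hcard : (F.card : ℝ) ≠ 0 := Nat.cast_ne_zero.2 hF.card_ne_zero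
  rw [Finsupp.sum, support_barycenter, Finset.sum_congr rfl fun _ hs => barycenter_apply_of_mem hs,
    Finset.sum_const, nsmul_eq_mul, mul_one_div_cancel hcard]

lemma barycenter_mem_realization (hF : F.Nonempty) (hFK : F ∈ K) :
    barycenter F ∈ realization K :=
  ⟨barycenter_nonneg F, sum_barycenter hF, (support_barycenter F).symm ▸ hFK⟩

lemma IsSimplicialComplex.realization_nonempty (hK : IsSimplicialComplex K) :
    (realization K).Nonempty :=
  let ⟨F, hF⟩ := hK.1
  ⟨barycenter F, barycenter_mem_realization (hK.2.1 F hF) hF⟩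

lemma IsSimplicialComplex.exists_apply_eq_zero (hL : IsSimplicialComplex L) (hF : F.Nonempty)
    (hFL : F ∉ L) (hβ : β ∈ realization L) : ∃ s ∈ F, β s = 0 := by
  have not_subset : ¬F ⊆ β.support := fun h => hFL (hL.2.2 _ hβ.2.2 F hF h)
  obtain ⟨s, hs, hsβ⟩ := Finset.not_subset.1 not_subset
  exact ⟨s, hs, Finsupp.notMem_support_iff.1 hsβ⟩

lemma IsSimplicialComplex.one_div_card_le_distToSet_barycenter (hL : IsSimplicialComplex L)
    (hF : F.Nonempty) (hFL : F ∉ L) :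
    1 / (F.card : ℝ) ≤ distToSet (barycenter F) (realization L) := by
  refine le_distToSet hL.realization_nonempty fun β hβ => ?_
  obtain ⟨s, hs, hβs⟩ := hL.exists_apply_eq_zero hF hFL hβ
  calc 1 / (F.card : ℝ) = ∑ t ∈ {s}, (barycenter F t - β t) := by
        rw [Finset.sum_singleton, barycenter_apply_of_mem hs, hβs, sub_zero]
    _ ≤ l1dist (barycenter F) β := sum_sub_le_l1dist ((sum_barycenter hF).trans hβ.2.1.symm) _

lemma IsSimplicialComplex.one_div_card_le_hdelta (hL : IsSimplicialComplex L)
    (hF : F.Nonempty) (hFK : F ∈ K) (hFL : F ∉ L) : 1 / (F.card : ℝ) ≤ hdelta K L :=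
  (hL.one_div_card_le_distToSet_barycenter hF hFL).trans
    (distToSet_le_hdelta hL.realization_nonempty (barycenter_mem_realization hF hFK))

lemma IsSimplicialComplex.one_div_le_hdelta_of_not_skeleton_subset (hK : IsSimplicialComplex K)
    (hL : IsSimplicialComplex L) {n : ℕ} (h : ¬skeleton n K ⊆ skeleton n L) :
    1 / ((n : ℝ) + 1) ≤ hdelta K L := by
  obtain ⟨F, ⟨hFK, hcard⟩, hF⟩ := Set.not_subset.1 h
  have hFL : F ∉ L := fun hFL => hF ⟨hFL, hcard⟩
  have hne : F.Nonempty := hK.2.1 F hFK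
  calc 1 / ((n : ℝ) + 1) ≤ 1 / (F.card : ℝ) :=
        one_div_le_one_div_of_le (Nat.cast_pos.2 hne.card_pos) (mod_cast hcard)
    _ ≤ hdelta K L := hL.one_div_card_le_hdelta hne hFK hFL

end Realization

theorem stmt9_general {S : Type*} {K₁ K₂ : Set (Finset S)} (h1 : IsSimplicialComplex K₁)
    (h2 : IsSimplicialComplex K₂) {n : ℕ} (hn : skeleton n K₁ ≠ skeleton n K₂) :
    1 / ((n : ℝ) + 1) ≤ hdist K₁ K₂ := by
  obtain h | h := not_and_or.1 (mt Set.Subset.antisymm_iff.2 hn)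
  · exact le_max_of_le_left (h1.one_div_le_hdelta_of_not_skeleton_subset h2 h)
  · exact le_max_of_le_right (h2.one_div_le_hdelta_of_not_skeleton_subset h1 h)

/-- If the `N`-skeletons of `𝒦₁, 𝒦₂` agree but their `(N+1)`-skeletons differ,
then `d(𝒦₁, 𝒦₂) ≥ 1/(N+2)`. -/
theorem stmt9 {S : Type*} (K₁ K₂ : Set (Finset S))
    (h1 : IsSimplicialComplex K₁) (h2 : IsSimplicialComplex K₂) (N : ℕ)
    (hN : skeleton N K₁ = skeleton N K₂)
    (hN1 : skeleton (N + 1) K₁ ≠ skeleton (N + 1) K₂) :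
    1 / ((N : ℝ) + 2) ≤ hdist K₁ K₂ := by
  have h := stmt9_general h1 h2 hN1
  rwa [Nat.cast_add_one, add_assoc, one_add_one_eq_two] at h
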